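/- Let E be a real normed vector space, f : E → ℝ a binary classifier, ε ≥ 0, and S ⊆ E a set such that for every x ∈ S there exists K(x) ≥ 0 with f Lipschitz with constant K(x) on the closed ball of radius ε around x and |f(x)| > ε·K(x). Then for all x₁, x₂ ∈ S such that f(x₁) > 0 and f(x₂) ≤ 0 (or vice versa), ‖x₁ − x₂‖ > 2ε. (Combination of the local certification principle with Lemma 1, used in the proof of Theorem 3: points of S verified via local Lipschitz constants and classified differently are more than 2ε-separated.) -/

import Mathlib

/-!
A margin `ε * K < |f x|` forbids `f` from changing sign on the closed `ε`-ball around `x`, so the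
predicted class is constant there. Balls on which different classes are predicted are disjoint, and
in a real normed space disjoint closed balls have centres further apart than the sum of their radii.
-/

open Metric

/-- The classifier `c`, with labels in an arbitrary type, is robust at `x` with radius `r`: it
assigns the label of `x` to the whole closed `r`-ball around `x`. A binary classifier given by the
sign of `f` is encoded with labels in `Prop`, as `fun y ↦ 0 < f y`. -/
def RobustAt {X α : Type*} [PseudoMetricSpace X] (c : X → α) (x : X) (r : ℝ) : Prop :=
  ∀ y ∈ closedBall x r, c y = c x

namespace RobustAt

variable {α : Type*}

theorem disjoint_closedBall {X : Type*} [PseudoMetricSpace X] {c : X → α} {x₁ x₂ : X} {r₁ r₂ : ℝ}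
    (h₁ : RobustAt c x₁ r₁) (h₂ : RobustAt c x₂ r₂) (hne : c x₁ ≠ c x₂) :
    Disjoint (closedBall x₁ r₁) (closedBall x₂ r₂) :=
  Set.disjoint_left.2 fun y hy₁ hy₂ ↦ hne ((h₁ y hy₁).symm.trans (h₂ y hy₂))

theorem add_lt_dist {E : Type*} [SeminormedAddCommGroup E] [NormedSpace ℝ E] {c : E → α}
    {x₁ x₂ : E} {r₁ r₂ : ℝ} (h₁ : RobustAt c x₁ r₁) (h₂ : RobustAt c x₂ r₂) (hr₁ : 0 ≤ r₁)
    (hr₂ : 0 ≤ r₂) (hne : c x₁ ≠ c x₂) : r₁ + r₂ < dist x₁ x₂ :=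
  (disjoint_closedBall_closedBall_iff hr₁ hr₂).1 (h₁.disjoint_closedBall h₂ hne)

end RobustAt

theorem pos_iff_pos_of_abs_sub_lt_abs {R : Type*} [AddCommGroup R] [LinearOrder R]
    [IsOrderedAddMonoid R] {a b : R} (h : |b - a| < |a|) : 0 < b ↔ 0 < a := by
  obtain ⟨hlower, hupper⟩ := abs_lt.1 h
  rcases le_or_gt a 0 with ha | ha
  · have hb : b < 0 := by
      simpa only [abs_of_nonpos ha, sub_lt_iff_lt_add, neg_add_cancel] using hupper
    exact iff_of_false hb.not_gt ha.not_gt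
  · have hb : 0 < b := by
      simpa only [abs_of_pos ha, lt_sub_iff_add_lt, neg_add_cancel] using hlower
    exact iff_of_true hb ha

theorem robustAt_pos_of_mul_lt_abs {X : Type*} [PseudoMetricSpace X] {f : X → ℝ} {x : X}
    {r K : ℝ} (hK : 0 ≤ K) (hf : ∀ y ∈ closedBall x r, |f y - f x| ≤ K * dist y x)
    (hmargin : r * K < |f x|) : RobustAt (fun y ↦ 0 < f y) x r := by
  intro y hy
  refine propext (pos_iff_pos_of_abs_sub_lt_abs ?_)
  calc |f y - f x| ≤ K * dist y x := hf y hy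
    _ ≤ K * r := mul_le_mul_of_nonneg_left (mem_closedBall.1 hy) hK
    _ = r * K := mul_comm K r
    _ < |f x| := hmargin

theorem certified_points_separated_general {E : Type*} [SeminormedAddCommGroup E]
    [NormedSpace ℝ E] (f : E → ℝ) (ε : E → ℝ) (S : Set E) (hε : ∀ x ∈ S, 0 ≤ ε x)
    (hloc : ∀ x ∈ S, ∃ K : ℝ, 0 ≤ K ∧
      (∀ y ∈ closedBall x (ε x), |f y - f x| ≤ K * ‖y - x‖) ∧ ε x * K < |f x|) :
    ∀ x₁ ∈ S, ∀ x₂ ∈ S, (0 < f x₁ ↔ ¬ 0 < f x₂) → ε x₁ + ε x₂ < ‖x₁ - x₂‖ := by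
  have hrobust : ∀ x ∈ S, RobustAt (fun y ↦ 0 < f y) x (ε x) := by
    intro x hx
    obtain ⟨K, hK, hf, hmargin⟩ := hloc x hx
    exact robustAt_pos_of_mul_lt_abs hK (by simpa only [dist_eq_norm] using hf) hmargin
  intro x₁ hx₁ x₂ hx₂ hclass
  have hne : (0 < f x₁) ≠ (0 < f x₂) := fun heq ↦ iff_not_self (heq ▸ hclass)
  rw [← dist_eq_norm]
  exact (hrobust x₁ hx₁).add_lt_dist (hrobust x₂ hx₂) (hε x₁ hx₁) (hε x₂ hx₂) hne

theorem certified_points_separated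
    {E : Type*} [NormedAddCommGroup E] [NormedSpace ℝ E]
    (f : E → ℝ) (ε : ℝ) (hε : 0 ≤ ε) (S : Set E)
    (hloc : ∀ x ∈ S, ∃ K : ℝ, 0 ≤ K ∧
      (∀ y₁ ∈ Metric.closedBall x ε, ∀ y₂ ∈ Metric.closedBall x ε,
        |f y₁ - f y₂| ≤ K * ‖y₁ - y₂‖) ∧
      |f x| > ε * K) :
    ∀ x₁ ∈ S, ∀ x₂ ∈ S, (0 < f x₁ ↔ ¬ 0 < f x₂) → ‖x₁ - x₂‖ > 2 * ε := by
  simpa only [two_mul] using certified_points_separated_general f (fun _ ↦ ε) S (fun _ _ ↦ hε)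
    fun x hx ↦ (hloc x hx).imp fun _ ⟨hK, hf, hmargin⟩ ↦
      ⟨hK, fun y hy ↦ hf y hy x (mem_closedBall_self hε), hmargin⟩
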